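/- arXiv:1007.0912 — 4 statements merged into one kernel-verified Lean document; each statement's English description precedes it below -/
import Mathlib

section
/- Condition (A) holds if and only if ⟨V(x*), ∇f(x*)⟩ = 0 for every x* ∈ Γ, i.e., if and only if the vector field V is tangent to the hypersurface Γ at every point of Γ. -/
open Filter Topology

/-- Partial derivative of `g : ℝⁿ → ℝ` in the `i`-th coordinate direction. -/
noncomputable def pderiv' {n : ℕ} (g : (Fin n → ℝ) → ℝ) (i : Fin n) (x : Fin n → ℝ) : ℝ :=
  fderiv ℝ g x (Pi.single i 1)

/-- Divergence of a vector field on ℝⁿ. -/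
noncomputable def diverg {n : ℕ} (V : (Fin n → ℝ) → (Fin n → ℝ)) (x : Fin n → ℝ) : ℝ :=
  ∑ i, pderiv' (fun y => V y i) i x

/-- Gradient of `g : ℝⁿ → ℝ`. -/
noncomputable def grad' {n : ℕ} (g : (Fin n → ℝ) → ℝ) (x : Fin n → ℝ) : Fin n → ℝ :=
  fun i => pderiv' g i x

/-- The Euclidean inner product on ℝⁿ. -/
noncomputable def dotp {n : ℕ} (u w : Fin n → ℝ) : ℝ := ∑ i, u i * w i

/-- Condition (A): for every `x* ∈ Γ`, `|f x|^(r+1) · div W x → 0` as `x → x*`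
with `x ∈ Ω \ Γ`. -/
def CondA {n : ℕ} (Ω Γ : Set (Fin n → ℝ)) (f : (Fin n → ℝ) → ℝ) (r : ℝ)
    (W : (Fin n → ℝ) → (Fin n → ℝ)) : Prop :=
  ∀ xs ∈ Γ, Filter.Tendsto (fun x => |f x| ^ (r + 1) * diverg W x)
    (nhdsWithin xs (Ω \ Γ)) (nhds 0)

/-- Condition (B): for every `x* ∈ Γ` with `V x* = 0`, one has
`|f x|^r · div W x → 0` and `|f x|^(r+1) · ∂(div W)/∂x_i x → 0` as `x → x*`
with `x ∈ Ω \ Γ`, for each `i`. -/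
def CondB {n : ℕ} (Ω Γ : Set (Fin n → ℝ)) (f : (Fin n → ℝ) → ℝ) (r : ℝ)
    (V W : (Fin n → ℝ) → (Fin n → ℝ)) : Prop :=
  ∀ xs ∈ Γ, V xs = 0 →
    Filter.Tendsto (fun x => |f x| ^ r * diverg W x) (nhdsWithin xs (Ω \ Γ)) (nhds 0) ∧
    ∀ i : Fin n, Filter.Tendsto (fun x => |f x| ^ (r + 1) * pderiv' (diverg W) i x)
      (nhdsWithin xs (Ω \ Γ)) (nhds 0)

theorem hasFDerivAt_abs_rpow_neg {n : ℕ} {f : (Fin n → ℝ) → ℝ} {x : Fin n → ℝ}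
    (hf : DifferentiableAt ℝ f x) (hx : f x ≠ 0) (r : ℝ) :
    HasFDerivAt (fun y => |f y| ^ (-r))
      ((-r * |f x| ^ (-r - 1) * (SignType.sign (f x) : ℝ)) • fderiv ℝ f x) x := by
  have h := (Real.hasDerivAt_rpow_const (x := |f x|) (p := -r)
    (Or.inl (abs_ne_zero.mpr hx))).comp (f x) (hasDerivAt_abs hx)
  exact h.comp_hasFDerivAt x hf.hasFDerivAt

/-- Product rule for the divergence of `|f| ^ (-r) • V`, cleared of the singular factor. -/
theorem abs_rpow_mul_diverg {n : ℕ} {f : (Fin n → ℝ) → ℝ} {V W : (Fin n → ℝ) → (Fin n → ℝ)}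
    {x : Fin n → ℝ} {r : ℝ} (hf : DifferentiableAt ℝ f x) (hV : DifferentiableAt ℝ V x)
    (hx : f x ≠ 0) (hW : W =ᶠ[𝓝 x] fun y => |f y| ^ (-r) • V y) :
    |f x| ^ (r + 1) * diverg W x =
      |f x| * diverg V x - r * (SignType.sign (f x) : ℝ) * dotp (V x) (grad' f x) := by
  have hpos : 0 < |f x| := abs_pos.mpr hx
  have h₁ : |f x| ^ (r + 1) * |f x| ^ (-r) = |f x| := by
    rw [← Real.rpow_add hpos]; simp
  have h₂ : |f x| ^ (r + 1) * |f x| ^ (-r - 1) = 1 := by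
    rw [← Real.rpow_add hpos]; ring_nf; simp
  simp only [diverg, dotp, grad', pderiv', Finset.mul_sum, ← Finset.sum_sub_distrib]
  refine Finset.sum_congr rfl fun i _ => ?_
  have hVi : DifferentiableAt ℝ (fun y => V y i) x := differentiableAt_pi.mp hV i
  have hWi : (fun y => W y i) =ᶠ[𝓝 x] fun y => |f y| ^ (-r) * V y i := by
    filter_upwards [hW] with y hy
    simp [hy]
  rw [(((hasFDerivAt_abs_rpow_neg hf hx r).mul hVi.hasFDerivAt).congr_of_eventuallyEq hWi).fderiv]
  simp only [add_apply, smul_apply, smul_eq_mul]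
  linear_combination (fderiv ℝ (fun y => V y i) x) (Pi.single i 1) * h₁ -
    r * (SignType.sign (f x) : ℝ) * V x i * fderiv ℝ f x (Pi.single i 1) * h₂

theorem continuousOn_pderiv {n : ℕ} {Ω : Set (Fin n → ℝ)} (hΩ : IsOpen Ω)
    {g : (Fin n → ℝ) → ℝ} (hg : ContDiffOn ℝ 1 g Ω) (i : Fin n) :
    ContinuousOn (pderiv' g i) Ω :=
  (hg.continuousOn_fderiv_of_isOpen hΩ le_rfl).clm_apply continuousOn_const

/-- A point of a regular level set is a limit of points off the level set. -/
theorem neBot_nhdsWithin_diff_zeros {n : ℕ} {Ω : Set (Fin n → ℝ)} (hΩ : IsOpen Ω)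
    {f : (Fin n → ℝ) → ℝ} {x : Fin n → ℝ} (hx : x ∈ Ω) (hreg : grad' f x ≠ 0) :
    (𝓝[Ω \ {y | y ∈ Ω ∧ f y = 0}] x).NeBot := by
  rw [← mem_closure_iff_nhdsWithin_neBot, mem_closure_iff_frequently]
  intro h
  have hzero : f =ᶠ[𝓝 x] fun _ => 0 := by
    filter_upwards [h, hΩ.mem_nhds hx] with y hy hyΩ
    by_contra hne
    exact hy ⟨hyΩ, fun hy' => hne hy'.2⟩
  apply hreg
  ext i
  simp [grad', pderiv', hzero.fderiv_eq]

/-- Condition (A) holds iff `⟨V x*, ∇f x*⟩ = 0` for every `x* ∈ Γ`, i.e. iff `V` is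
tangent to the hypersurface `Γ` at every point of `Γ`. -/
theorem stmt1 {n : ℕ} (hn : 2 ≤ n) (Ω Γ : Set (Fin n → ℝ)) (hΩ : IsOpen Ω)
    (f : (Fin n → ℝ) → ℝ) (s : ℕ) (hs : 2 ≤ s) (hf : ContDiffOn ℝ s f Ω)
    (hΓ : Γ = {x | x ∈ Ω ∧ f x = 0}) (hΓne : Γ.Nonempty)
    (hreg : ∀ x ∈ Γ, grad' f x ≠ 0)
    (V : (Fin n → ℝ) → (Fin n → ℝ)) (hV : ContDiffOn ℝ s V Ω)
    (r : ℝ) (hr : 0 < r)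
    (W : (Fin n → ℝ) → (Fin n → ℝ))
    (hW : ∀ x ∈ Ω \ Γ, W x = |f x| ^ (-r) • V x) :
    CondA Ω Γ f r W ↔ ∀ xs ∈ Γ, dotp (V xs) (grad' f xs) = 0 := by
  have hf₁ : ContDiffOn ℝ 1 f Ω := hf.of_le (by exact_mod_cast (by omega : 1 ≤ s))
  have hV₁ : ContDiffOn ℝ 1 V Ω := hV.of_le (by exact_mod_cast (by omega : 1 ≤ s))
  subst hΓ
  refine forall₂_congr fun xs hxs => ?_
  have hxsΩ : Ω ∈ 𝓝 xs := hΩ.mem_nhds hxs.1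
  have hne := neBot_nhdsWithin_diff_zeros hΩ hxs.1 (hreg xs hxs)
  set S : Set (Fin n → ℝ) := Ω \ {x | x ∈ Ω ∧ f x = 0} with hS
  have hSne : ∀ x ∈ S, f x ≠ 0 := fun x hx h0 => hx.2 ⟨hx.1, h0⟩
  have hSopen : IsOpen S := by
    have h : S = Ω ∩ f ⁻¹' {0}ᶜ := by
      ext x
      simp +contextual [hS]
    exact h ▸ hf.continuousOn.isOpen_inter_preimage hΩ isOpen_compl_singleton
  have hkey : ∀ x ∈ S, |f x| ^ (r + 1) * diverg W x =
      |f x| * diverg V x - r * (SignType.sign (f x) : ℝ) * dotp (V x) (grad' f x) := by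
    intro x hx
    have hxΩ : Ω ∈ 𝓝 x := hΩ.mem_nhds hx.1
    refine abs_rpow_mul_diverg ((hf₁.contDiffAt hxΩ).differentiableAt one_ne_zero)
      ((hV₁.contDiffAt hxΩ).differentiableAt one_ne_zero) (hSne x hx) ?_
    filter_upwards [hSopen.mem_nhds hx] with y hy using hW y hy
  have hdivV : ContinuousAt (diverg V) xs :=
    (continuousOn_finsetSum _ fun i _ =>
      continuousOn_pderiv hΩ (contDiffOn_pi.mp hV₁ i) i).continuousAt hxsΩ
  have hdot : ContinuousAt (fun x => dotp (V x) (grad' f x)) xs :=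
    (continuousOn_finsetSum _ fun i _ =>
      (continuousOn_pi.mp hV.continuousOn i).mul (continuousOn_pderiv hΩ hf₁ i)).continuousAt hxsΩ
  have hsmall : Tendsto (fun x => |f x| * diverg V x) (𝓝[S] xs) (𝓝 0) := by
    have h := (hf.continuousOn.continuousAt hxsΩ).abs.tendsto.mul hdivV.tendsto
    rw [show f xs = 0 from hxs.2, abs_zero, zero_mul] at h
    exact h.mono_left nhdsWithin_le_nhds
  have hdot' := hdot.tendsto.mono_left (nhdsWithin_le_nhds (s := S))
  have hnorm : ∀ x ∈ S, |r * (SignType.sign (f x) : ℝ) * dotp (V x) (grad' f x)| =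
      r * |dotp (V x) (grad' f x)| := by
    intro x hx
    rcases (hSne x hx).lt_or_gt with h | h <;> simp [h, abs_mul, abs_of_pos hr]
  constructor
  · intro h
    have h₁ : Tendsto (fun x => r * |dotp (V x) (grad' f x)|) (𝓝[S] xs) (𝓝 0) := by
      have h₂ := (hsmall.sub h).abs
      rw [sub_zero, abs_zero] at h₂
      refine h₂.congr' ?_
      filter_upwards [self_mem_nhdsWithin] with x hx
      rw [hkey x hx, sub_sub_cancel, hnorm x hx]
    have h₃ := tendsto_nhds_unique h₁ (hdot'.abs.const_mul r)
    simpa [hr.ne'] using h₃.symm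
  · intro h
    rw [h] at hdot'
    have h₁ : Tendsto (fun x => r * (SignType.sign (f x) : ℝ) * dotp (V x) (grad' f x))
        (𝓝[S] xs) (𝓝 0) := by
      rw [tendsto_zero_iff_abs_tendsto_zero]
      have h₂ := hdot'.abs.const_mul r
      rw [abs_zero, mul_zero] at h₂
      refine h₂.congr' ?_
      filter_upwards [self_mem_nhdsWithin] with x hx using (hnorm x hx).symm
    have h₃ := hsmall.sub h₁
    rw [sub_zero] at h₃
    refine h₃.congr' ?_
    filter_upwards [self_mem_nhdsWithin] with x hx using (hkey x hx).symm
end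

section
/- Assume Conditions (A) and (B) hold. Let x* ∈ Γ be a point with V(x*) = 0 and let A = (∂V_i/∂x_j(x*)) be the Jacobian matrix of V at x*. Then Aᵀ ∇f(x*) = (tr A / r) · ∇f(x*); in particular, since ∇f(x*) ≠ 0, the number tr(A)/r is an eigenvalue of the matrix A. Equivalently, if λ₁, …, λₙ are the complex eigenvalues of A counted with multiplicity, then there exists an index j with λ₁ + ⋯ + λₙ = r·λ_j. -/
open Filter Topology

/-- Divergence of `|f|^(-r) • V` away from the zero set of `f`. -/
theorem diverg_abs_rpow_smul {n : ℕ} {f : (Fin n → ℝ) → ℝ} {V : (Fin n → ℝ) → (Fin n → ℝ)}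
    {x : Fin n → ℝ} (r : ℝ) (hf : DifferentiableAt ℝ f x) (hV : DifferentiableAt ℝ V x)
    (hx : f x ≠ 0) :
    diverg (fun y => |f y| ^ (-r) • V y) x =
      |f x| ^ (-r) * (diverg V x - r * (fderiv ℝ f x (V x) / f x)) := by
  have hpos : 0 < |f x| := abs_pos.mpr hx
  have hpow : HasDerivAt (fun t : ℝ => |t| ^ (-r)) (-r * |f x| ^ (-r) / f x) (f x) := by
    convert (hasDerivAt_abs hx).rpow_const (p := -r) (Or.inl hpos.ne') using 1
    rw [Real.rpow_sub_one hpos.ne']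
    rcases lt_or_gt_of_ne hx with h | h
    · simp [h, abs_of_neg h]
      ring
    · simp [h, abs_of_pos h]
      ring
  have hcomp : HasFDerivAt (fun y => |f y| ^ (-r))
      ((-r * |f x| ^ (-r) / f x) • fderiv ℝ f x) x :=
    hpow.comp_hasFDerivAt x hf.hasFDerivAt
  have hterm : ∀ i, pderiv' (fun y => (|f y| ^ (-r) • V y) i) i x =
      |f x| ^ (-r) * pderiv' (fun y => V y i) i x +
        (-r * |f x| ^ (-r) / f x) * (V x i * fderiv ℝ f x (Pi.single i 1)) := by
    intro i
    have hVi : HasFDerivAt (fun y => V y i) (fderiv ℝ (fun y => V y i) x) x :=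
      (differentiableAt_pi.mp hV i).hasFDerivAt
    have hprod := (hcomp.fun_mul hVi).fderiv
    simp only [pderiv', Pi.smul_apply, smul_eq_mul]
    rw [hprod]
    simp
    ring
  have hsum : fderiv ℝ f x (V x) = ∑ i, V x i * fderiv ℝ f x (Pi.single i 1) := by
    conv_lhs => rw [pi_eq_sum_univ' (V x)]
    simp [map_sum]
  simp only [diverg]
  rw [Finset.sum_congr rfl fun i _ => hterm i, Finset.sum_add_distrib, ← Finset.mul_sum,
    ← Finset.mul_sum, ← hsum]
  ring

/-- If `V` vanishes at a regular zero `x₀` of `f` and `df(V) / f` tends to `c` at `x₀`, then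
`df` at `x₀` is an eigenvector, with eigenvalue `c`, of the transpose of `DV(x₀)`. -/
theorem fderiv_comp_fderiv_eq_of_tendsto_div {E : Type*} [NormedAddCommGroup E] [NormedSpace ℝ E]
    {f : E → ℝ} {V : E → E} {x₀ : E} {c : ℝ} (hf : DifferentiableAt ℝ f x₀)
    (hf' : ContinuousAt (fderiv ℝ f) x₀) (hV : DifferentiableAt ℝ V x₀) (hfx : f x₀ = 0)
    (hVx : V x₀ = 0) (hreg : fderiv ℝ f x₀ ≠ 0)
    (hlim : Tendsto (fun x => fderiv ℝ f x (V x) / f x) (𝓝[{x | f x ≠ 0}] x₀) (𝓝 c)) (v : E) :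
    fderiv ℝ f x₀ (fderiv ℝ V x₀ v) = c * fderiv ℝ f x₀ v := by
  have hgeneric : ∀ v, fderiv ℝ f x₀ v ≠ 0 →
      fderiv ℝ f x₀ (fderiv ℝ V x₀ v) = c * fderiv ℝ f x₀ v := by
    intro v hv
    have hfslope := (hf.hasFDerivAt.hasLineDerivAt v).tendsto_slope_zero
    have hVslope := (hV.hasFDerivAt.hasLineDerivAt v).tendsto_slope_zero
    simp only [hfx, hVx, sub_zero, smul_eq_mul] at hfslope hVslope
    have hline : Tendsto (fun t : ℝ => x₀ + t • v) (𝓝[≠] 0) (𝓝 x₀) := by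
      have : Continuous fun t : ℝ => x₀ + t • v := by fun_prop
      simpa using (this.tendsto 0).mono_left nhdsWithin_le_nhds
    have hne : ∀ᶠ t : ℝ in 𝓝[≠] 0, f (x₀ + t • v) ≠ 0 := by
      filter_upwards [hfslope.eventually_ne hv] with t ht
      exact right_ne_zero_of_mul ht
    have hratio := hlim.comp (tendsto_nhdsWithin_iff.mpr ⟨hline, hne⟩)
    have hnum : Tendsto (fun t : ℝ => fderiv ℝ f (x₀ + t • v) (t⁻¹ • V (x₀ + t • v))) (𝓝[≠] 0)
        (𝓝 (fderiv ℝ f x₀ (fderiv ℝ V x₀ v))) :=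
      (isBoundedBilinearMap_apply.continuous.tendsto (fderiv ℝ f x₀, fderiv ℝ V x₀ v)).comp
        ((hf'.tendsto.comp hline).prodMk_nhds hVslope)
    have hquot := hnum.div hfslope hv
    have heq := tendsto_nhds_unique (hratio.congr' ?_) hquot
    · rw [heq, div_mul_cancel₀ _ hv]
    · filter_upwards [self_mem_nhdsWithin] with t ht
      have ht : t ≠ 0 := ht
      simp only [Function.comp_apply, map_smul, smul_eq_mul, Pi.div_apply]
      rw [mul_div_mul_left _ _ (inv_ne_zero ht)]
  obtain ⟨w, hw⟩ : ∃ w, fderiv ℝ f x₀ w ≠ 0 := by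
    by_contra! h
    exact hreg (ContinuousLinearMap.ext h)
  by_cases hv : fderiv ℝ f x₀ v = 0
  · have hadd := hgeneric (v + w) (by simpa [hv] using hw)
    have hw' := hgeneric w hw
    simp only [map_add] at hadd
    linarith
  · exact hgeneric v hv

/-- If `c` is a root of the characteristic polynomial of a real matrix `A` with
`trace A = r * c`, then the sum of the complex eigenvalues is `r` times one of them. -/
theorem Matrix.exists_sum_eq_mul_of_isRoot_charpoly {n : ℕ} {A : Matrix (Fin n) (Fin n) ℝ}
    {r c : ℝ} (hc : A.charpoly.IsRoot c) (htr : A.trace = r * c) (lam : Fin n → ℂ)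
    (hlam : (A.map (fun t => (t : ℂ))).charpoly =
      ∏ j, (Polynomial.X - Polynomial.C (lam j))) :
    ∃ j, ∑ i, lam i = (r : ℂ) * lam j := by
  have hmap : A.map (fun t => (t : ℂ)) = A.map Complex.ofRealHom := rfl
  have hroot : (A.map (fun t => (t : ℂ))).charpoly.IsRoot (c : ℂ) := by
    rw [hmap, Matrix.charpoly_map]
    exact hc.map
  have htrace : (A.map (fun t => (t : ℂ))).trace = ∑ i, lam i := by
    rw [Matrix.trace_eq_sum_roots_charpoly, hlam]
    have := Polynomial.roots_multiset_prod_X_sub_C (Finset.univ.val.map lam)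
    rw [Multiset.map_map] at this
    exact congrArg Multiset.sum this
  rw [hlam, Polynomial.IsRoot.def, Polynomial.eval_prod, Finset.prod_eq_zero_iff] at hroot
  obtain ⟨j, -, hj⟩ := hroot
  have hj : (c : ℂ) = lam j := by simpa [sub_eq_zero] using hj
  refine ⟨j, ?_⟩
  rw [← htrace, ← hj, hmap, ← Complex.ofReal_mul, ← htr]
  exact (AddMonoidHom.map_trace Complex.ofRealHom A).symm

/-- Assume Conditions (A) and (B). If `x* ∈ Γ` with `V x* = 0` and `A` is the Jacobian
matrix of `V` at `x*`, then `Aᵀ ∇f(x*) = (tr A / r) · ∇f(x*)`; in particular `tr A / r`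
is an eigenvalue of `A`. Equivalently, if `λ₁, …, λₙ` are the complex eigenvalues of `A`
counted with multiplicity, then `λ₁ + ⋯ + λₙ = r·λⱼ` for some index `j`. -/
theorem stmt5 {n : ℕ} (hn : 2 ≤ n) (Ω Γ : Set (Fin n → ℝ)) (hΩ : IsOpen Ω)
    (f : (Fin n → ℝ) → ℝ) (s : ℕ) (hs : 2 ≤ s) (hf : ContDiffOn ℝ s f Ω)
    (hΓ : Γ = {x | x ∈ Ω ∧ f x = 0}) (hΓne : Γ.Nonempty)
    (hreg : ∀ x ∈ Γ, grad' f x ≠ 0)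
    (V : (Fin n → ℝ) → (Fin n → ℝ)) (hV : ContDiffOn ℝ s V Ω)
    (r : ℝ) (hr : 0 < r)
    (W : (Fin n → ℝ) → (Fin n → ℝ))
    (hW : ∀ x ∈ Ω \ Γ, W x = |f x| ^ (-r) • V x)
    (hA : CondA Ω Γ f r W) (hB : CondB Ω Γ f r V W)
    (xs : Fin n → ℝ) (hxs : xs ∈ Γ) (hVxs : V xs = 0)
    (A : Matrix (Fin n) (Fin n) ℝ)
    (hAdef : A = Matrix.of fun i j => pderiv' (fun y => V y i) j xs) :
    A.transpose.mulVec (grad' f xs) = (A.trace / r) • grad' f xs ∧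
    Module.End.HasEigenvalue (Matrix.mulVecLin A) (A.trace / r) ∧
    ∀ lam : Fin n → ℂ,
      (A.map (fun t => (t : ℂ))).charpoly = ∏ j, (Polynomial.X - Polynomial.C (lam j)) →
      ∃ j, ∑ i, lam i = (r : ℂ) * lam j := by
  subst hΓ
  obtain ⟨hxΩ, hfxs⟩ := hxs
  have hs1 : (1 : WithTop ℕ∞) ≤ s := by exact_mod_cast (by omega : 1 ≤ s)
  have hs0 : (s : WithTop ℕ∞) ≠ 0 := by exact_mod_cast (by omega : s ≠ 0)
  have hfat : ∀ x ∈ Ω, ContDiffAt ℝ s f x := fun x hx => hf.contDiffAt (hΩ.mem_nhds hx)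
  have hVat : ∀ x ∈ Ω, ContDiffAt ℝ s V x := fun x hx => hV.contDiffAt (hΩ.mem_nhds hx)
  have hfd : ∀ x ∈ Ω, DifferentiableAt ℝ f x := fun x hx => (hfat x hx).differentiableAt hs0
  have hVd : ∀ x ∈ Ω, DifferentiableAt ℝ V x := fun x hx => (hVat x hx).differentiableAt hs0
  have hVpd : ∀ x ∈ Ω, ∀ i j, pderiv' (fun y => V y i) j x = fderiv ℝ V x (Pi.single j 1) i := by
    intro x hx i j
    rw [pderiv', fderiv_apply (hVd x hx)]
    rfl
  have hlimdiv : Tendsto (diverg V) (𝓝 xs) (𝓝 A.trace) := by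
    have hcont : ContinuousAt (fun x => ∑ i, fderiv ℝ V x (Pi.single i 1) i) xs := by
      have := ((hVat xs hxΩ).fderiv_right (m := 0) (by simpa using hs1)).continuousAt
      exact tendsto_finsetSum _ fun i _ =>
        tendsto_pi_nhds.mp (this.clm_apply continuousAt_const).tendsto i
    have htr : A.trace = ∑ i, fderiv ℝ V xs (Pi.single i 1) i := by
      simp [hAdef, Matrix.trace, hVpd xs hxΩ]
    rw [htr]
    refine hcont.tendsto.congr' ?_
    filter_upwards [hΩ.mem_nhds hxΩ] with x hx
    simp [diverg, hVpd x hx]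
  have hfilter : 𝓝[Ω \ {x | x ∈ Ω ∧ f x = 0}] xs = 𝓝[{x | f x ≠ 0}] xs := by
    refine nhdsWithin_eq_nhdsWithin hxΩ hΩ ?_
    ext x
    simp
    tauto
  have hlim : Tendsto (fun x => fderiv ℝ f x (V x) / f x) (𝓝[{x | f x ≠ 0}] xs)
      (𝓝 (A.trace / r)) := by
    have hB' := (hB xs ⟨hxΩ, hfxs⟩ hVxs).1
    rw [hfilter] at hB'
    have hdiff := ((hlimdiv.mono_left nhdsWithin_le_nhds).sub hB').div_const r
    rw [sub_zero] at hdiff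
    refine hdiff.congr' ?_
    filter_upwards [self_mem_nhdsWithin, nhdsWithin_le_nhds (hΩ.mem_nhds hxΩ)] with x hx hxΩ'
    have hx : f x ≠ 0 := hx
    have hWeq : W =ᶠ[𝓝 x] fun y => |f y| ^ (-r) • V y := by
      filter_upwards [hΩ.mem_nhds hxΩ', (hfd x hxΩ').continuousAt.eventually_ne hx] with y hy hfy
      exact hW y ⟨hy, fun h => hfy h.2⟩
    have hdiv : diverg W x = diverg (fun y => |f y| ^ (-r) • V y) x := by
      refine Finset.sum_congr rfl fun i _ => ?_
      have : (fun y => W y i) =ᶠ[𝓝 x] fun y => (|f y| ^ (-r) • V y) i :=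
        hWeq.fun_comp (fun w => w i)
      rw [pderiv', pderiv', this.fderiv_eq]
    rw [hdiv, diverg_abs_rpow_smul r (hfd x hxΩ') (hVd x hxΩ') hx, ← mul_assoc,
      ← Real.rpow_add (abs_pos.mpr hx)]
    simp [hr.ne']
  have hgrad : grad' f xs ≠ 0 := hreg xs ⟨hxΩ, hfxs⟩
  have hDf : fderiv ℝ f xs ≠ 0 := by
    intro h
    exact hgrad (funext fun i => by simp [grad', pderiv', h])
  have hcomp := fderiv_comp_fderiv_eq_of_tendsto_div (hfd xs hxΩ)
    ((hfat xs hxΩ).fderiv_right (m := 0) (by simpa using hs1)).continuousAt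
    (hVd xs hxΩ) hfxs hVxs hDf hlim
  have heig : A.transpose.mulVec (grad' f xs) = (A.trace / r) • grad' f xs := by
    ext j
    have hj := hcomp (Pi.single j 1)
    rw [pi_eq_sum_univ' (fderiv ℝ V xs (Pi.single j 1)), map_sum] at hj
    simp only [Pi.smul_apply, smul_eq_mul, grad', pderiv']
    rw [← hj]
    simp [Matrix.mulVec, dotProduct, hAdef, hVpd xs hxΩ]
    rfl
  have hroot : A.charpoly.IsRoot (A.trace / r) := by
    rw [← Matrix.charpoly_transpose, ← Matrix.charpoly_mulVecLin,
      ← Module.End.hasEigenvalue_iff_isRoot_charpoly]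
    exact Module.End.hasEigenvalue_of_hasEigenvector
      (Module.End.hasEigenvector_iff.mpr ⟨Module.End.mem_eigenspace_iff.mpr heig, hgrad⟩)
  refine ⟨heig, ?_, Matrix.exists_sum_eq_mul_of_isRoot_charpoly hroot (by field_simp)⟩
  rwa [Module.End.hasEigenvalue_iff_isRoot_charpoly, Matrix.charpoly_mulVecLin]
end

section
/- Let φ : Ω → ℝ be a C^s function with φ(x) ≠ 0 for every x ∈ Ω. If Conditions (A) and (B) hold for the pair of vector fields V and W = |f|^{−r} V, then Conditions (A) and (B) also hold for the pair φV and φW = |f|^{−r}(φV). That is, the main assumptions are invariant with respect to multiplication of the vector fields by a nonvanishing C^s scalar factor. -/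
open Filter Topology

theorem ContDiffAt.pderiv' {n : ℕ} {g : (Fin n → ℝ) → ℝ} {x : Fin n → ℝ} {k m : ℕ}
    (hg : ContDiffAt ℝ k g x) (hmk : m + 1 ≤ k) (i : Fin n) :
    ContDiffAt ℝ m (pderiv' g i) x :=
  (hg.fderiv_right (m := m) (by exact_mod_cast hmk)).clm_apply contDiffAt_const

theorem pderiv'_mul {n : ℕ} {a b : (Fin n → ℝ) → ℝ} {x : Fin n → ℝ}
    (ha : DifferentiableAt ℝ a x) (hb : DifferentiableAt ℝ b x) (i : Fin n) :
    pderiv' (fun y => a y * b y) i x = a x * pderiv' b i x + pderiv' a i x * b x := by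
  simp [pderiv', fderiv_fun_mul ha hb, mul_comm]

theorem pderiv'_add {n : ℕ} {a b : (Fin n → ℝ) → ℝ} {x : Fin n → ℝ}
    (ha : DifferentiableAt ℝ a x) (hb : DifferentiableAt ℝ b x) (i : Fin n) :
    pderiv' (fun y => a y + b y) i x = pderiv' a i x + pderiv' b i x := by
  simp [pderiv', fderiv_fun_add ha hb]

theorem pderiv'_sum {n : ℕ} {ι : Type*} {u : Finset ι} {a : ι → (Fin n → ℝ) → ℝ}
    {x : Fin n → ℝ} (ha : ∀ j ∈ u, DifferentiableAt ℝ (a j) x) (i : Fin n) :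
    pderiv' (fun y => ∑ j ∈ u, a j y) i x = ∑ j ∈ u, pderiv' (a j) i x := by
  simp [pderiv', fderiv_fun_sum ha]

theorem Filter.EventuallyEq.pderiv'_eq {n : ℕ} {a b : (Fin n → ℝ) → ℝ} {x : Fin n → ℝ}
    (h : a =ᶠ[𝓝 x] b) (i : Fin n) : pderiv' a i x = pderiv' b i x := by
  simp only [pderiv', h.fderiv_eq]

/-- The Leibniz rule `div (φ W) = φ div W + ∇φ · W`. -/
theorem diverg_smul {n : ℕ} {φ : (Fin n → ℝ) → ℝ} {W : (Fin n → ℝ) → (Fin n → ℝ)}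
    {x : Fin n → ℝ} (hφ : DifferentiableAt ℝ φ x)
    (hW : ∀ j, DifferentiableAt ℝ (fun y => W y j) x) :
    diverg (fun y => φ y • W y) x = φ x * diverg W x + ∑ j, pderiv' φ j x * W x j := by
  simp only [diverg, Pi.smul_apply, smul_eq_mul, Finset.mul_sum, ← Finset.sum_add_distrib]
  exact Finset.sum_congr rfl fun j _ => pderiv'_mul hφ (hW j) j

/-- The divergence of a `C²` vector field is `C¹`. -/
theorem contDiffAt_diverg {n : ℕ} {W : (Fin n → ℝ) → (Fin n → ℝ)} {x : Fin n → ℝ}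
    (hW : ∀ j, ContDiffAt ℝ (2 : ℕ) (fun y => W y j) x) :
    ContDiffAt ℝ (1 : ℕ) (diverg W) x := by
  unfold diverg
  exact ContDiffAt.sum fun j _ => (hW j).pderiv' le_rfl j

/-- First partial derivatives of `div (φ W)`. -/
theorem pderiv'_diverg_smul {n : ℕ} {φ : (Fin n → ℝ) → ℝ} {W : (Fin n → ℝ) → (Fin n → ℝ)}
    {x : Fin n → ℝ} (hφ : ContDiffAt ℝ (2 : ℕ) φ x)
    (hW : ∀ j, ContDiffAt ℝ (2 : ℕ) (fun y => W y j) x) (i : Fin n) :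
    pderiv' (diverg fun y => φ y • W y) i x =
      φ x * pderiv' (diverg W) i x + pderiv' φ i x * diverg W x +
        ∑ j, (pderiv' φ j x * pderiv' (fun y => W y j) i x +
          pderiv' (pderiv' φ j) i x * W x j) := by
  have hφd : DifferentiableAt ℝ φ x := hφ.differentiableAt (by simp)
  have hWd : ∀ j, DifferentiableAt ℝ (fun y => W y j) x :=
    fun j => (hW j).differentiableAt (by simp)
  have hdiv : DifferentiableAt ℝ (diverg W) x :=
    (contDiffAt_diverg hW).differentiableAt (by simp)
  have hpφ : ∀ j, DifferentiableAt ℝ (pderiv' φ j) x :=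
    fun j => (hφ.pderiv' le_rfl j).differentiableAt (by simp)
  have hev : (diverg fun y => φ y • W y) =ᶠ[𝓝 x]
      fun y => φ y * diverg W y + ∑ j, pderiv' φ j y * W y j := by
    filter_upwards [hφ.eventually (by simp),
      eventually_all.2 fun j => (hW j).eventually (by simp)] with y hy hyW
    exact diverg_smul (hy.differentiableAt (by simp))
      fun j => (hyW j).differentiableAt (by simp)
  rw [hev.pderiv'_eq, pderiv'_add (hφd.fun_mul hdiv)
    (DifferentiableAt.fun_sum fun j _ => (hpφ j).fun_mul (hWd j)), pderiv'_mul hφd hdiv,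
    pderiv'_sum fun j _ => (hpφ j).fun_mul (hWd j)]
  simp only [pderiv'_mul (hpφ _) (hWd _)]

theorem abs_rpow_neg_eq_exp {t : ℝ} (ht : t ≠ 0) (r : ℝ) :
    |t| ^ (-r) = Real.exp (-r * Real.log t) := by
  rw [Real.rpow_def_of_pos (abs_pos.2 ht), Real.log_abs, mul_comm]

theorem contDiffAt_abs_rpow_neg {E : Type*} [NormedAddCommGroup E] [NormedSpace ℝ E]
    {f : E → ℝ} {x : E} {k : WithTop ℕ∞} (hf : ContDiffAt ℝ k f x) (hx : f x ≠ 0) (r : ℝ) :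
    ContDiffAt ℝ k (fun y => |f y| ^ (-r)) x := by
  refine (contDiffAt_const.mul (hf.log hx)).exp.congr_of_eventuallyEq
    (f := fun y => Real.exp (-r * Real.log (f y))) ?_
  filter_upwards [hf.continuousAt.eventually_ne hx] with y hy
  exact abs_rpow_neg_eq_exp hy r

theorem pderiv'_abs_rpow_neg {n : ℕ} {f : (Fin n → ℝ) → ℝ} {x : Fin n → ℝ}
    (hf : DifferentiableAt ℝ f x) (hx : f x ≠ 0) (r : ℝ) (i : Fin n) :
    pderiv' (fun y => |f y| ^ (-r)) i x = |f x| ^ (-r) * (-r * (pderiv' f i x / f x)) := by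
  have hev : (fun y => |f y| ^ (-r)) =ᶠ[𝓝 x] fun y => Real.exp (-r * Real.log (f y)) := by
    filter_upwards [hf.continuousAt.eventually_ne hx] with y hy
    exact abs_rpow_neg_eq_exp hy r
  have hd := (((hf.hasFDerivAt.log hx).const_mul (-r)).exp).fderiv
  rw [hev.pderiv'_eq, pderiv', hd, abs_rpow_neg_eq_exp hx]
  simp only [pderiv', smul_apply, smul_eq_mul]
  ring

theorem abs_rpow_mul_abs_rpow_neg {t : ℝ} (ht : t ≠ 0) (r : ℝ) :
    |t| ^ r * |t| ^ (-r) = 1 := by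
  rw [← Real.rpow_add (abs_pos.2 ht), add_neg_cancel, Real.rpow_zero]

/-- The rescaled partial derivatives `|f|^(r+1) ∂ᵢ(|f|^(-r) v)`. -/
theorem abs_rpow_mul_pderiv' {n : ℕ} {f v : (Fin n → ℝ) → ℝ} {x : Fin n → ℝ}
    (hf : DifferentiableAt ℝ f x) (hv : DifferentiableAt ℝ v x) (hx : f x ≠ 0) (r : ℝ)
    (i : Fin n) :
    |f x| ^ (r + 1) * pderiv' (fun y => |f y| ^ (-r) * v y) i x =
      |f x| * pderiv' v i x - r * pderiv' f i x * (|f x| / f x * v x) := by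
  have hg : DifferentiableAt ℝ (fun y => |f y| ^ (-r)) x := by
    have hd := ((hf.log hx).const_mul (-r)).exp
    refine hd.congr_of_eventuallyEq ?_
    filter_upwards [hf.continuousAt.eventually_ne hx] with y hy
    exact abs_rpow_neg_eq_exp hy r
  rw [pderiv'_mul hg hv, pderiv'_abs_rpow_neg hf hx, Real.rpow_add_one (abs_ne_zero.2 hx)]
  linear_combination (|f x| * pderiv' v i x - r * pderiv' f i x * (|f x| / f x * v x)) *
    abs_rpow_mul_abs_rpow_neg hx r

/-- Conditions (A) and (B) are invariant with respect to multiplication of the vector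
fields `V` and `W = |f|^{−r} V` by a nonvanishing `C^s` scalar factor `φ`. -/
theorem stmt6 {n : ℕ} (hn : 2 ≤ n) (Ω Γ : Set (Fin n → ℝ)) (hΩ : IsOpen Ω)
    (f : (Fin n → ℝ) → ℝ) (s : ℕ) (hs : 2 ≤ s) (hf : ContDiffOn ℝ s f Ω)
    (hΓ : Γ = {x | x ∈ Ω ∧ f x = 0}) (hΓne : Γ.Nonempty)
    (hreg : ∀ x ∈ Γ, grad' f x ≠ 0)
    (V : (Fin n → ℝ) → (Fin n → ℝ)) (hV : ContDiffOn ℝ s V Ω)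
    (r : ℝ) (hr : 0 < r)
    (W : (Fin n → ℝ) → (Fin n → ℝ))
    (hW : ∀ x ∈ Ω \ Γ, W x = |f x| ^ (-r) • V x)
    (φ : (Fin n → ℝ) → ℝ) (hφ : ContDiffOn ℝ s φ Ω) (hφ0 : ∀ x ∈ Ω, φ x ≠ 0)
    (hA : CondA Ω Γ f r W) (hB : CondB Ω Γ f r V W) :
    CondA Ω Γ f r (fun x => φ x • W x) ∧
    CondB Ω Γ f r (fun x => φ x • V x) (fun x => φ x • W x) := by
  have mem_diff : ∀ x, x ∈ Ω \ Γ ↔ x ∈ Ω ∧ f x ≠ 0 := by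
    intro x
    subst hΓ
    simp only [Set.mem_sdiff, Set.mem_ofPred_eq]
    tauto
  have hs' : ((2 : ℕ) : WithTop ℕ∞) ≤ s := by exact_mod_cast hs
  have f2 : ∀ x ∈ Ω, ContDiffAt ℝ (2 : ℕ) f x :=
    fun x hx => (hf.contDiffAt (hΩ.mem_nhds hx)).of_le hs'
  have φ2 : ∀ x ∈ Ω, ContDiffAt ℝ (2 : ℕ) φ x :=
    fun x hx => (hφ.contDiffAt (hΩ.mem_nhds hx)).of_le hs'
  have V2 : ∀ x ∈ Ω, ∀ j, ContDiffAt ℝ (2 : ℕ) (fun y => V y j) x :=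
    fun x hx => contDiffAt_pi.1 ((hV.contDiffAt (hΩ.mem_nhds hx)).of_le hs')
  have W_eq : ∀ x ∈ Ω \ Γ, ∀ j,
      (fun y => W y j) =ᶠ[𝓝 x] fun y => |f y| ^ (-r) * V y j := by
    intro x hx j
    obtain ⟨hxΩ, hfx⟩ := (mem_diff x).1 hx
    filter_upwards [hΩ.mem_nhds hxΩ, (f2 x hxΩ).continuousAt.eventually_ne hfx] with y hy hfy
    simp [hW y ((mem_diff y).2 ⟨hy, hfy⟩)]
  have W2 : ∀ x ∈ Ω \ Γ, ∀ j, ContDiffAt ℝ (2 : ℕ) (fun y => W y j) x := by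
    intro x hx j
    obtain ⟨hxΩ, hfx⟩ := (mem_diff x).1 hx
    exact ((contDiffAt_abs_rpow_neg (f2 x hxΩ) hfx r).mul (V2 x hxΩ j)).congr_of_eventuallyEq
      (W_eq x hx j)
  have rpow_W : ∀ x ∈ Ω \ Γ, ∀ j, |f x| ^ r * W x j = V x j := by
    intro x hx j
    rw [(W_eq x hx j).eq_of_nhds, ← mul_assoc,
      abs_rpow_mul_abs_rpow_neg ((mem_diff x).1 hx).2, one_mul]
  have rpow_div : ∀ x ∈ Ω \ Γ, |f x| ^ r * diverg (fun y => φ y • W y) x =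
      φ x * (|f x| ^ r * diverg W x) + ∑ j, pderiv' φ j x * V x j := by
    intro x hx
    rw [diverg_smul ((φ2 x hx.1).differentiableAt (by simp))
      fun j => (W2 x hx j).differentiableAt (by simp), mul_add, Finset.mul_sum]
    congr 1
    · ring
    · refine Finset.sum_congr rfl fun j _ => ?_
      rw [← rpow_W x hx j]
      ring
  have rpow_succ : ∀ x ∈ Ω \ Γ, |f x| ^ (r + 1) = |f x| * |f x| ^ r := by
    intro x hx
    rw [Real.rpow_add_one (abs_ne_zero.2 ((mem_diff x).1 hx).2), mul_comm]
  have Γ_sub : ∀ x ∈ Γ, x ∈ Ω ∧ f x = 0 := fun x hx => by simpa [hΓ] using hx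
  have lim_of_cont : ∀ {g : (Fin n → ℝ) → ℝ} {x : Fin n → ℝ}, ContinuousAt g x →
      Tendsto g (𝓝[Ω \ Γ] x) (𝓝 (g x)) := fun h => h.tendsto.mono_left nhdsWithin_le_nhds
  have lim_f : ∀ x ∈ Γ, Tendsto (fun y => |f y|) (𝓝[Ω \ Γ] x) (𝓝 0) := by
    intro x hx
    simpa [(Γ_sub x hx).2] using lim_of_cont (f2 x (Γ_sub x hx).1).continuousAt.abs
  have lim_pφ : ∀ x ∈ Γ, ∀ j, Tendsto (pderiv' φ j) (𝓝[Ω \ Γ] x) (𝓝 (pderiv' φ j x)) :=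
    fun x hx j => lim_of_cont ((φ2 x (Γ_sub x hx).1).pderiv' (m := 1) le_rfl j).continuousAt
  have lim_V : ∀ x ∈ Γ, ∀ j, Tendsto (fun y => V y j) (𝓝[Ω \ Γ] x) (𝓝 (V x j)) :=
    fun x hx j => lim_of_cont (V2 x (Γ_sub x hx).1 j).continuousAt
  have lim_φV : ∀ x ∈ Γ, Tendsto (fun y => ∑ j, pderiv' φ j y * V y j) (𝓝[Ω \ Γ] x)
      (𝓝 (∑ j, pderiv' φ j x * V x j)) :=
    fun x hx => tendsto_finsetSum _ fun j _ => (lim_pφ x hx j).mul (lim_V x hx j)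
  have lim_φ : ∀ x ∈ Γ, Tendsto φ (𝓝[Ω \ Γ] x) (𝓝 (φ x)) :=
    fun x hx => lim_of_cont (φ2 x (Γ_sub x hx).1).continuousAt
  refine ⟨fun x hx => ?_, fun x hx hVx => ?_⟩
  · have lim := ((lim_φ x hx).mul (hA x hx)).add ((lim_f x hx).mul (lim_φV x hx))
    simp only [mul_zero, zero_mul, add_zero] at lim
    refine lim.congr' ?_
    filter_upwards [self_mem_nhdsWithin] with y hy
    rw [rpow_succ y hy, mul_assoc _ _ (diverg (fun y => φ y • W y) y), rpow_div y hy]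
    ring
  · obtain ⟨hxΩ, -⟩ := Γ_sub x hx
    have hVx0 : V x = 0 := (smul_eq_zero.1 hVx).resolve_left (hφ0 x hxΩ)
    obtain ⟨hB0, hB1⟩ := hB x hx hVx0
    refine ⟨?_, fun i => ?_⟩
    · have lim := ((lim_φ x hx).mul hB0).add (lim_φV x hx)
      simp only [hVx0, Pi.zero_apply, mul_zero, Finset.sum_const_zero, add_zero] at lim
      refine lim.congr' ?_
      filter_upwards [self_mem_nhdsWithin] with y hy
      exact (rpow_div y hy).symm
    · have lim_V0 : ∀ j, Tendsto (fun y => V y j) (𝓝[Ω \ Γ] x) (𝓝 0) := fun j => by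
        simpa [hVx0] using lim_V x hx j
      have lim_sign : ∀ j, Tendsto (fun y => |f y| / f y * V y j) (𝓝[Ω \ Γ] x) (𝓝 0) := by
        intro j
        refine squeeze_zero_norm (fun y => ?_) (tendsto_zero_iff_norm_tendsto_zero.1 (lim_V0 j))
        rw [norm_mul]
        refine mul_le_of_le_one_left (norm_nonneg _) ?_
        rw [norm_div, Real.norm_eq_abs, abs_abs]
        exact div_self_le_one _
      have lim_pW : ∀ j, Tendsto (fun y => |f y| ^ (r + 1) * pderiv' (fun z => W z j) i y)
          (𝓝[Ω \ Γ] x) (𝓝 0) := by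
        intro j
        have lim_pV := lim_of_cont ((V2 x hxΩ j).pderiv' (m := 1) le_rfl i).continuousAt
        have lim_pf := lim_of_cont ((f2 x hxΩ).pderiv' (m := 1) le_rfl i).continuousAt
        have lim := ((lim_f x hx).mul lim_pV).sub ((lim_pf.const_mul r).mul (lim_sign j))
        simp only [zero_mul, mul_zero, sub_zero] at lim
        refine lim.congr' ?_
        filter_upwards [self_mem_nhdsWithin] with y hy
        rw [(W_eq y hy j).pderiv'_eq, abs_rpow_mul_pderiv'
          ((f2 y hy.1).differentiableAt (by simp)) ((V2 y hy.1 j).differentiableAt (by simp))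
          ((mem_diff y).1 hy).2]
      have lim_ppφ : ∀ j, Tendsto (pderiv' (pderiv' φ j) i) (𝓝[Ω \ Γ] x)
          (𝓝 (pderiv' (pderiv' φ j) i x)) := fun j =>
        lim_of_cont ((((φ2 x hxΩ).pderiv' (m := 1) le_rfl j).pderiv' (m := 0) le_rfl
          i).continuousAt)
      have lim := (((lim_φ x hx).mul (hB1 i)).add
        ((lim_f x hx).mul ((lim_pφ x hx i).mul hB0))).add
        (tendsto_finsetSum Finset.univ fun j _ => ((lim_pφ x hx j).mul (lim_pW j)).add
          ((lim_f x hx).mul ((lim_ppφ j).mul (lim_V0 j))))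
      simp only [mul_zero, add_zero, Finset.sum_const_zero] at lim
      refine lim.congr' ?_
      filter_upwards [self_mem_nhdsWithin] with y hy
      rw [pderiv'_diverg_smul (φ2 y hy.1) (W2 y hy), mul_add, mul_add, Finset.mul_sum]
      congr 1
      · rw [rpow_succ y hy]
        ring
      · refine Finset.sum_congr rfl fun j _ => ?_
        rw [← rpow_W y hy j, rpow_succ y hy]
        ring
end

section
/- Let N ∈ ℕ and suppose p₁λ₁ + p₂λ₂ ≠ 0 for all nonnegative integers p₁, p₂ with 1 ≤ p₁ + p₂ ≤ N. Then there exist C^∞ functions U⁽¹⁾, …, U⁽ˡ⁾ defined on a neighborhood of 0 in ℝ^{2+l} whose gradients with respect to the variables ζ = (ζ₁, …, ζ_l) at the point 0 are linearly independent, such that for each i the Lie derivative L_V U⁽ⁱ⁾ = ⟨V, ∇U⁽ⁱ⁾⟩ is N-flat by (ξ, η) at 0, i.e., ∂^{p₁+p₂}(L_V U⁽ⁱ⁾)/∂ξ^{p₁}∂η^{p₂}(0, 0, ζ) = 0 for all nonnegative integers p₁, p₂ with p₁ + p₂ ≤ N and all ζ in a neighborhood of 0 in ℝ^l. -/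
open Filter Topology

section FlatLieDerivative

variable {E : Type*} [NormedAddCommGroup E] [NormedSpace ℝ E]

/-- The homogeneous combination `∑ uʲ vᵐ⁻ʲ fⱼ` of degree `m` in the linear forms `u`, `v`
with variable coefficients `fⱼ`. -/
def homComb (u v : E →L[ℝ] ℝ) (m : ℕ) (f : Fin (m + 1) → E → ℝ) (x : E) : ℝ :=
  ∑ j : Fin (m + 1), u x ^ (j : ℕ) * v x ^ (m - (j : ℕ)) * f j x

variable (u v : E →L[ℝ] ℝ)

/-- Multiplying by a smooth function vanishing at `x` raises the order of flatness by one. -/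
lemma iteratedFDerivWithin_mul_eq_zero {U : Set E} (hU : IsOpen U) {w F : E → ℝ}
    (hw : ContDiffOn ℝ (⊤ : ℕ∞) w U) (hF : ContDiffOn ℝ (⊤ : ℕ∞) F U) {x : E} (hx : x ∈ U)
    (hwx : w x = 0) {n : ℕ} (h : ∀ k < n, iteratedFDerivWithin ℝ k F U x = 0) :
    ∀ k < n + 1, iteratedFDerivWithin ℝ k (fun y => w y * F y) U x = 0 := by
  intro k hk
  have hb := norm_iteratedFDerivWithin_mul_le (n := k) (N := ((⊤ : ℕ∞) : WithTop ℕ∞))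
    hw hF hU.uniqueDiffOn hx (by exact_mod_cast le_top)
  refine norm_le_zero_iff.1 (hb.trans (le_of_eq (Finset.sum_eq_zero fun i _ => ?_)))
  rcases Nat.eq_zero_or_pos i with rfl | hi
  · simp [hwx]
  · rcases Nat.eq_zero_or_pos k with rfl | hk0
    · have : i = 0 := by simp_all
      omega
    · rw [h (k - i) (by omega)]
      simp

/-- Products `uᵖ v^q F` are flat of order `p + q` along `u = v = 0`. -/
lemma iteratedFDerivWithin_monomial_mul_eq_zero {U : Set E} (hU : IsOpen U) {F : E → ℝ}
    (hF : ContDiffOn ℝ (⊤ : ℕ∞) F U) {x : E} (hx : x ∈ U) (hu : u x = 0) (hv : v x = 0)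
    (p q : ℕ) :
    ∀ k < p + q, iteratedFDerivWithin ℝ k (fun y => u y ^ p * v y ^ q * F y) U x = 0 := by
  induction p with
  | zero =>
    induction q with
    | zero => simp
    | succ q ih =>
      have h := iteratedFDerivWithin_mul_eq_zero hU v.contDiff.contDiffOn
        (F := fun y => u y ^ 0 * v y ^ q * F y)
        (((u.contDiff.pow 0).mul (v.contDiff.pow q)).contDiffOn.mul hF) hx hv ih
      intro k hk
      rw [← h k hk]
      congr 1
      ext y
      ring
  | succ p ih =>
    have h := iteratedFDerivWithin_mul_eq_zero hU u.contDiff.contDiffOn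
      (F := fun y => u y ^ p * v y ^ q * F y)
      (((u.contDiff.pow p).mul (v.contDiff.pow q)).contDiffOn.mul hF) hx hu ih
    intro k hk
    rw [← h k (by omega)]
    congr 1
    ext y
    ring

lemma iteratedFDerivWithin_homComb_eq_zero {U : Set E} (hU : IsOpen U) {m : ℕ}
    {f : Fin (m + 1) → E → ℝ} (hf : ∀ j, ContDiffOn ℝ (⊤ : ℕ∞) (f j) U) {x : E} (hx : x ∈ U)
    (hu : u x = 0) (hv : v x = 0) {k : ℕ} (hk : k < m) :
    iteratedFDerivWithin ℝ k (homComb u v m f) U x = 0 := by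
  have hs : ∀ j ∈ (Finset.univ : Finset (Fin (m + 1))), ContDiffOn ℝ k
      (fun y => u y ^ (j : ℕ) * v y ^ (m - (j : ℕ)) * f j y) U := fun j _ =>
    ((((u.contDiff.pow _).mul (v.contDiff.pow _)).contDiffOn.mul (hf j)).of_le
      (by exact_mod_cast le_top))
  unfold homComb
  rw [iteratedFDerivWithin_fun_sum_apply hU.uniqueDiffOn hx fun j hj => (hs j hj) x hx]
  refine Finset.sum_eq_zero fun j _ => ?_
  exact iteratedFDerivWithin_monomial_mul_eq_zero u v hU (hf j) hx hu hv _ _ k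
    (by have := j.2; omega)

lemma contDiffOn_homComb {U : Set E} {m : ℕ} {f : Fin (m + 1) → E → ℝ}
    (hf : ∀ j, ContDiffOn ℝ (⊤ : ℕ∞) (f j) U) :
    ContDiffOn ℝ (⊤ : ℕ∞) (homComb u v m f) U :=
  ContDiffOn.sum fun j _ =>
    ((u.contDiff.pow _).mul (v.contDiff.pow _)).contDiffOn.mul (hf j)

lemma hasFDerivAt_monomial (p q : ℕ) (x : E) :
    HasFDerivAt (fun y => u y ^ p * v y ^ q)
      ((u x ^ p) • (((q : ℝ) * v x ^ (q - 1)) • v) + (v x ^ q) • (((p : ℝ) * u x ^ (p - 1)) • u))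
      x := by
  have h1 := (u.hasFDerivAt (x := x)).pow p
  have h2 := (v.hasFDerivAt (x := x)).pow q
  simp only [nsmul_eq_mul] at h1 h2
  exact h1.mul h2

lemma fderiv_homComb {m : ℕ} {f : Fin (m + 1) → E → ℝ} {x : E}
    (hf : ∀ j, DifferentiableAt ℝ (f j) x) (w : E) :
    fderiv ℝ (homComb u v m f) x w = ∑ j : Fin (m + 1),
      (fderiv ℝ (fun y => u y ^ (j : ℕ) * v y ^ (m - (j : ℕ))) x w * f j x
        + u x ^ (j : ℕ) * v x ^ (m - (j : ℕ)) * fderiv ℝ (f j) x w) := by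
  have h : HasFDerivAt (homComb u v m f) _ x := HasFDerivAt.fun_sum (u := Finset.univ) fun j _ =>
    (hasFDerivAt_monomial u v (j : ℕ) (m - (j : ℕ)) x).differentiableAt.hasFDerivAt.mul
      (hf j).hasFDerivAt
  rw [h.fderiv]
  simp only [sum_apply, add_apply,
    smul_apply, smul_eq_mul]
  exact Finset.sum_congr rfl fun j _ => by ring

lemma fderiv_homComb_of_eq_zero {m : ℕ} {f : Fin (m + 2) → E → ℝ} {x w : E}
    (hf : ∀ j, DifferentiableAt ℝ (f j) x) (hu : u x = 0) (hv : v x = 0)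
    (huw : u w = 0) (hvw : v w = 0) : fderiv ℝ (homComb u v (m + 1) f) x w = 0 := by
  rw [fderiv_homComb u v hf]
  refine Finset.sum_eq_zero fun j _ => ?_
  rw [(hasFDerivAt_monomial u v _ _ x).fderiv]
  rcases Nat.eq_zero_or_pos (j : ℕ) with h | h
  · simp [hvw, hv, h]
  · simp [huw, hu, h.ne']

/-- The columns of the operator induced by a vector field on homogeneous polynomials. -/
lemma exists_column {m : ℕ} {a b c d : E → ℝ} {U : Set E} {x₀ : E}
    (ha : ContDiffOn ℝ (⊤ : ℕ∞) a U) (hb : ContDiffOn ℝ (⊤ : ℕ∞) b U)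
    (hc : ContDiffOn ℝ (⊤ : ℕ∞) c U) (hd : ContDiffOn ℝ (⊤ : ℕ∞) d U)
    (hb0 : b x₀ = 0) (hc0 : c x₀ = 0) (k : Fin (m + 1)) :
    ∃ M : Fin (m + 1) → E → ℝ, (∀ j, ContDiffOn ℝ (⊤ : ℕ∞) (M j) U) ∧
      (∀ j, M j x₀ = if j = k then (k : ℕ) * a x₀ + ((m - (k : ℕ) : ℕ) : ℝ) * d x₀ else 0) ∧
      ∀ x w, u w = u x * a x + v x * b x → v w = u x * c x + v x * d x →
        fderiv ℝ (fun y => u y ^ (k : ℕ) * v y ^ (m - (k : ℕ))) x w = homComb u v m M x := by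
  obtain ⟨k, hk⟩ := k
  refine ⟨fun j x => (if (j : ℕ) = k then (k : ℝ) * a x + ((m - k : ℕ) : ℝ) * d x else 0)
    + (if (j : ℕ) + 1 = k then (k : ℝ) * b x else 0)
    + (if (j : ℕ) = k + 1 then ((m - k : ℕ) : ℝ) * c x else 0), fun j => ?_, fun j => ?_, ?_⟩
  · refine (ContDiffOn.add ?_ ?_).add ?_
    · split_ifs
      · exact (contDiffOn_const.mul ha).add (contDiffOn_const.mul hd)
      · exact contDiffOn_const
    · split_ifs
      · exact contDiffOn_const.mul hb
      · exact contDiffOn_const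
    · split_ifs
      · exact contDiffOn_const.mul hc
      · exact contDiffOn_const
  · simp [hb0, hc0, Fin.ext_iff]
  · intro x w hu hv
    rw [(hasFDerivAt_monomial u v _ _ x).fderiv]
    simp only [homComb, mul_add, Finset.sum_add_distrib, add_apply,
      smul_apply, smul_eq_mul, hu, hv]
    have h1 : ∑ j : Fin (m + 1), u x ^ (j : ℕ) * v x ^ (m - (j : ℕ)) *
        (if (j : ℕ) = k then (k : ℝ) * a x + ((m - k : ℕ) : ℝ) * d x else 0)
        = u x ^ k * v x ^ (m - k) * ((k : ℝ) * a x + ((m - k : ℕ) : ℝ) * d x) := by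
      rw [Finset.sum_eq_single ⟨k, hk⟩] <;> simp +contextual [Fin.ext_iff]
    have h2 : ∑ j : Fin (m + 1), u x ^ (j : ℕ) * v x ^ (m - (j : ℕ)) *
        (if (j : ℕ) + 1 = k then (k : ℝ) * b x else 0)
        = u x ^ (k - 1) * v x ^ (m - k + 1) * ((k : ℝ) * b x) := by
      rcases k with _ | k
      · simp
      · rw [Finset.sum_eq_single ⟨k, by omega⟩]
        · have : m - k = m - (k + 1) + 1 := by omega
          simp [this]
        · simp +contextual [Fin.ext_iff]
        · simp
    have h3 : ∑ j : Fin (m + 1), u x ^ (j : ℕ) * v x ^ (m - (j : ℕ)) *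
        (if (j : ℕ) = k + 1 then ((m - k : ℕ) : ℝ) * c x else 0)
        = u x ^ (k + 1) * v x ^ (m - k - 1) * (((m - k : ℕ) : ℝ) * c x) := by
      rcases Nat.lt_or_ge k m with h | h
      · rw [Finset.sum_eq_single ⟨k + 1, by omega⟩]
        · simp [Nat.sub_sub]
        · simp +contextual [Fin.ext_iff]
        · simp
      · have : m - k = 0 := by omega
        simp [this]
    rw [h1, h2, h3]
    have e1 : (k : ℝ) * u x ^ (k - 1) * u x = k * u x ^ k := by
      rcases k with _ | k
      · simp
      · simp [pow_succ, mul_assoc]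
    have e2 : ((m - k : ℕ) : ℝ) * v x ^ (m - k - 1) * v x = ((m - k : ℕ) : ℝ) * v x ^ (m - k) := by
      rcases m - k with _ | k
      · simp
      · simp [pow_succ, mul_assoc]
    linear_combination (v x ^ (m - k) * a x) * e1 + (u x ^ k * d x) * e2

lemma mul_homComb_fst (m : ℕ) (f : Fin (m + 1) → E → ℝ) (x : E) :
    u x * homComb u v m f x = homComb u v (m + 1) (Fin.cons (fun _ => 0) f) x := by
  simp only [homComb]
  rw [Fin.sum_univ_succ (n := m + 1), Finset.mul_sum]
  simp only [Fin.cons_zero, Fin.cons_succ, mul_zero, zero_add, Fin.val_succ,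
    Nat.add_sub_add_right]
  exact Finset.sum_congr rfl fun j _ => by ring

lemma mul_homComb_snd (m : ℕ) (f : Fin (m + 1) → E → ℝ) (x : E) :
    v x * homComb u v m f x
      = homComb u v (m + 1) (Fin.snoc (α := fun _ => E → ℝ) f (fun _ => 0)) x := by
  simp only [homComb]
  rw [Fin.sum_univ_castSucc (n := m + 1), Finset.mul_sum]
  simp only [Fin.snoc_castSucc, Fin.snoc_last, mul_zero, add_zero, Fin.val_castSucc]
  refine Finset.sum_congr rfl fun j _ => ?_
  have : m + 1 - (j : ℕ) = m - j + 1 := by have := j.2; omega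
  rw [this]
  ring

lemma homComb_add (m : ℕ) (f g : Fin (m + 1) → E → ℝ) (x : E) :
    homComb u v m f x + homComb u v m g x = homComb u v m (fun j y => f j y + g j y) x := by
  simp only [homComb, mul_add, Finset.sum_add_distrib]

lemma contDiffOn_det {ι : Type*} [Fintype ι] [DecidableEq ι] {U : Set E}
    {M : E → Matrix ι ι ℝ} (hM : ∀ i j, ContDiffOn ℝ (⊤ : ℕ∞) (fun x => M x i j) U) :
    ContDiffOn ℝ (⊤ : ℕ∞) (fun x => (M x).det) U := by
  simp only [Matrix.det_apply']
  exact ContDiffOn.sum fun σ _ => contDiffOn_const.mul (contDiffOn_prod fun i _ => hM _ _)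

/-- A linear system with smooth coefficients that is invertible at `x₀` has a smooth solution
near `x₀`. -/
lemma exists_contDiffOn_mulVec_eq {ι : Type*} [Fintype ι] [DecidableEq ι] {U : Set E}
    (hU : IsOpen U) {x₀ : E} (hx₀ : x₀ ∈ U) {M : E → Matrix ι ι ℝ}
    (hM : ∀ i j, ContDiffOn ℝ (⊤ : ℕ∞) (fun x => M x i j) U) (h0 : (M x₀).det ≠ 0)
    {f : ι → E → ℝ} (hf : ∀ i, ContDiffOn ℝ (⊤ : ℕ∞) (f i) U) :
    ∃ U' ⊆ U, IsOpen U' ∧ x₀ ∈ U' ∧ ∃ h : ι → E → ℝ,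
      (∀ i, ContDiffOn ℝ (⊤ : ℕ∞) (h i) U') ∧
      ∀ x ∈ U', ∀ i, ∑ j, M x i j * h j x = f i x := by
  have hdet := contDiffOn_det hM
  refine ⟨U ∩ (fun x => (M x).det) ⁻¹' {0}ᶜ, Set.inter_subset_left,
    hdet.continuousOn.isOpen_inter_preimage hU isOpen_compl_singleton, ⟨hx₀, h0⟩,
    fun i x => (M x).det⁻¹ * (M x).cramer (fun k => f k x) i, fun i => ?_, ?_⟩
  · refine ((hdet.mono Set.inter_subset_left).inv fun x hx => hx.2).mul ?_
    simp only [Matrix.cramer_apply]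
    refine (contDiffOn_det fun p q => ?_).mono Set.inter_subset_left
    simp only [Matrix.updateCol_apply]
    split_ifs
    · exact hf p
    · exact hM p q
  · intro x hx i
    have hdx : (M x).det ≠ 0 := hx.2
    have h := congrFun (Matrix.mulVec_cramer (M x) (fun k => f k x)) i
    simp only [Matrix.mulVec, dotProduct, Pi.smul_apply, smul_eq_mul] at h
    calc _ = (M x).det⁻¹ * ∑ j, M x i j * (M x).cramer (fun k => f k x) j := by
          rw [Finset.mul_sum]
          exact Finset.sum_congr rfl fun j _ => by ring
      _ = f i x := by rw [h, inv_mul_cancel_left₀ hdx]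

/-- A smooth function can be corrected, without changing its derivative at `x₀` along
`ker u ∩ ker v`, so that its Lie derivative along `u • A + v • B` becomes homogeneous of degree
`N + 1` in `u`, `v`, provided there is no resonance up to order `N`. -/
lemma exists_fderiv_eq_homComb {U₀ : Set E} (hU₀ : IsOpen U₀) {x₀ : E} (hx₀ : x₀ ∈ U₀)
    (hu₀ : u x₀ = 0) (hv₀ : v x₀ = 0) {A B : E → E}
    (hA : ContDiffOn ℝ (⊤ : ℕ∞) A U₀) (hB : ContDiffOn ℝ (⊤ : ℕ∞) B U₀)
    (hb0 : u (B x₀) = 0) (hc0 : v (A x₀) = 0) {G₀ : E → ℝ}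
    (hG₀ : ContDiffOn ℝ (⊤ : ℕ∞) G₀ U₀) (N : ℕ)
    (hres : ∀ p q : ℕ, 1 ≤ p + q → p + q ≤ N →
      (p : ℝ) * u (A x₀) + (q : ℝ) * v (B x₀) ≠ 0) :
    ∃ U ⊆ U₀, IsOpen U ∧ x₀ ∈ U ∧ ∃ G : E → ℝ, ContDiffOn ℝ (⊤ : ℕ∞) G U ∧
      (∀ w, u w = 0 → v w = 0 → fderiv ℝ G x₀ w = fderiv ℝ G₀ x₀ w) ∧
      ∃ f : Fin (N + 2) → E → ℝ, (∀ j, ContDiffOn ℝ (⊤ : ℕ∞) (f j) U) ∧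
        ∀ x ∈ U, fderiv ℝ G x (u x • A x + v x • B x) = homComb u v (N + 1) f x := by
  have smooth_dir : ∀ {U : Set E}, IsOpen U → ∀ {h : E → ℝ} {C : E → E},
      ContDiffOn ℝ (⊤ : ℕ∞) h U → ContDiffOn ℝ (⊤ : ℕ∞) C U →
      ContDiffOn ℝ (⊤ : ℕ∞) (fun x => fderiv ℝ h x (C x)) U := fun hU _ _ hh hC =>
    (hh.fderiv_of_isOpen hU (by simp)).clm_apply hC
  have diff_at : ∀ {U : Set E}, IsOpen U → ∀ {h : E → ℝ}, ContDiffOn ℝ (⊤ : ℕ∞) h U →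
      ∀ x ∈ U, DifferentiableAt ℝ h x := fun hU _ hh x hx =>
    (hh.contDiffAt (hU.mem_nhds hx)).differentiableAt (by simp)
  induction N with
  | zero =>
    refine ⟨U₀, subset_rfl, hU₀, hx₀, G₀, hG₀, fun _ _ _ => rfl,
      ![fun x => fderiv ℝ G₀ x (B x), fun x => fderiv ℝ G₀ x (A x)], ?_, fun x _ => ?_⟩
    · intro j
      fin_cases j
      · exact smooth_dir hU₀ hG₀ hB
      · exact smooth_dir hU₀ hG₀ hA
    · simp [homComb, Fin.sum_univ_two]
      ring
  | succ N ih =>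
    obtain ⟨U, hUU₀, hU, hx₀U, G, hG, hGw, f, hf, hfG⟩ :=
      ih fun p q h1 h2 => hres p q h1 (by omega)
    have hA' := hA.mono hUU₀
    have hB' := hB.mono hUU₀
    choose M hMs hM0 hM using exists_column u v (m := N + 1) (U := U) (x₀ := x₀)
      (u.contDiff.comp_contDiffOn hA') (u.contDiff.comp_contDiffOn hB')
      (v.contDiff.comp_contDiffOn hA') (v.contDiff.comp_contDiffOn hB') hb0 hc0
    have hdet : (Matrix.of fun j k => M k j x₀).det ≠ 0 := by
      have : (Matrix.of fun j k => M k j x₀) = Matrix.diagonal fun k : Fin (N + 2) =>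
          ((k : ℕ) : ℝ) * u (A x₀) + ((N + 1 - (k : ℕ) : ℕ) : ℝ) * v (B x₀) := by
        ext j k
        simp only [Matrix.of_apply, hM0, Matrix.diagonal_apply, Function.comp_apply]
        split_ifs with h
        · rw [h]
        · rfl
      rw [this, Matrix.det_diagonal]
      exact Finset.prod_ne_zero_iff.2 fun k _ => hres _ _ (by have := k.2; omega)
        (by have := k.2; omega)
    obtain ⟨U', hU'U, hU', hx₀U', h, hhs, hh⟩ := exists_contDiffOn_mulVec_eq hU hx₀U
      (M := fun x => Matrix.of fun j k => M k j x) (fun j k => hMs k j) hdet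
      (f := fun j x => - f j x) (fun j => (hf j).neg)
    have hAU := hA'.mono hU'U
    have hBU := hB'.mono hU'U
    have hS := contDiffOn_homComb u v hhs
    refine ⟨U', hU'U.trans hUU₀, hU', hx₀U', fun x => G x + homComb u v (N + 1) h x,
      (hG.mono hU'U).add hS, fun w hu hv => ?_,
      fun j x => (Fin.cons (α := fun _ => E → ℝ) (fun _ => 0)
          (fun j x => fderiv ℝ (h j) x (A x)) : Fin (N + 3) → E → ℝ) j x
        + (Fin.snoc (α := fun _ => E → ℝ) (fun j x => fderiv ℝ (h j) x (B x))
          (fun _ => 0) : Fin (N + 3) → E → ℝ) j x, fun j => ?_, fun x hx => ?_⟩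
    · rw [fderiv_fun_add (diff_at hU hG _ hx₀U) (diff_at hU' hS _ hx₀U')]
      rw [add_apply, hGw w hu hv, fderiv_homComb_of_eq_zero u v
        (fun j => diff_at hU' (hhs j) _ hx₀U') hu₀ hv₀ hu hv, add_zero]
    · refine ContDiffOn.add ?_ ?_
      · refine Fin.cases ?_ (fun j => ?_) j
        · exact contDiffOn_const
        · exact smooth_dir hU' (hhs j) hAU
      · refine Fin.lastCases ?_ (fun j => ?_) j
        · simpa using contDiffOn_const
        · simpa using smooth_dir hU' (hhs j) hBU
    · rw [fderiv_fun_add (diff_at hU hG _ (hU'U hx)) (diff_at hU' hS _ hx),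
        add_apply, hfG x (hU'U hx),
        fderiv_homComb u v (fun j => diff_at hU' (hhs j) _ hx), ← homComb_add,
        ← mul_homComb_fst, ← mul_homComb_snd, Finset.sum_add_distrib]
      have key : ∑ k : Fin (N + 2), fderiv ℝ (fun y => u y ^ (k : ℕ) * v y ^ (N + 1 - (k : ℕ))) x
          (u x • A x + v x • B x) * h k x = - homComb u v (N + 1) f x := by
        have : ∀ k : Fin (N + 2), fderiv ℝ (fun y => u y ^ (k : ℕ) * v y ^ (N + 1 - (k : ℕ))) x
            (u x • A x + v x • B x) = homComb u v (N + 1) (M k) x :=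
          fun k => hM k x _ (by simp) (by simp)
        simp only [this, homComb, Finset.sum_mul]
        rw [Finset.sum_comm, ← Finset.sum_neg_distrib]
        refine Finset.sum_congr rfl fun j _ => ?_
        have := hh x hx j
        simp only [Matrix.of_apply] at this
        rw [← mul_neg, ← this, Finset.mul_sum]
        exact Finset.sum_congr rfl fun k _ => by ring
      rw [key]
      simp only [homComb, map_add, map_smul, smul_eq_mul, Finset.mul_sum]
      rw [← Finset.sum_add_distrib, add_neg_cancel_left]
      exact Finset.sum_congr rfl fun j _ => by ring

end FlatLieDerivative

/-- If there are no first-type resonances `p₁λ₁ + p₂λ₂ = 0` up to order `N`, then there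
exist `C^∞` functions `U⁽¹⁾, …, U⁽ˡ⁾` near `0`, independent by `ζ` at `0`, whose Lie
derivatives along `V` are `N`-flat by `(ξ, η)` at `0`. -/
theorem stmt7 (l : ℕ)
    (U₀ : Set (ℝ × ℝ × (Fin l → ℝ))) (hU₀ : IsOpen U₀) (h0 : (0 : ℝ × ℝ × (Fin l → ℝ)) ∈ U₀)
    (a b c d : (ℝ × ℝ × (Fin l → ℝ)) → ℝ) (e g : Fin l → (ℝ × ℝ × (Fin l → ℝ)) → ℝ)
    (ha : ContDiffOn ℝ (⊤ : ℕ∞) a U₀) (hb : ContDiffOn ℝ (⊤ : ℕ∞) b U₀)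
    (hc : ContDiffOn ℝ (⊤ : ℕ∞) c U₀) (hd : ContDiffOn ℝ (⊤ : ℕ∞) d U₀)
    (he : ∀ i, ContDiffOn ℝ (⊤ : ℕ∞) (e i) U₀) (hg : ∀ i, ContDiffOn ℝ (⊤ : ℕ∞) (g i) U₀)
    -- the linear part at 0 is diagonal with real nonzero eigenvalues λ₁ = a 0, λ₂ = d 0
    (hb0 : b 0 = 0) (hc0 : c 0 = 0) (ha0 : a 0 ≠ 0) (hd0 : d 0 ≠ 0)
    (V : (ℝ × ℝ × (Fin l → ℝ)) → (ℝ × ℝ × (Fin l → ℝ)))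
    (hV : V = fun x => (x.1 * a x + x.2.1 * b x, x.1 * c x + x.2.1 * d x,
      fun i => x.1 * e i x + x.2.1 * g i x))
    (N : ℕ)
    (hres : ∀ p₁ p₂ : ℕ, 1 ≤ p₁ + p₂ → p₁ + p₂ ≤ N → (p₁ : ℝ) * a 0 + (p₂ : ℝ) * d 0 ≠ 0) :
    ∃ (U₁ : Set (ℝ × ℝ × (Fin l → ℝ))) (G : Fin l → (ℝ × ℝ × (Fin l → ℝ)) → ℝ),
      IsOpen U₁ ∧ (0 : ℝ × ℝ × (Fin l → ℝ)) ∈ U₁ ∧ U₁ ⊆ U₀ ∧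
      (∀ i, ContDiffOn ℝ (⊤ : ℕ∞) (G i) U₁) ∧
      -- the gradients with respect to ζ at 0 are linearly independent
      LinearIndependent ℝ (fun i : Fin l =>
        (fun j : Fin l => fderiv ℝ (G i) 0 ((0 : ℝ), (0 : ℝ), Pi.single j (1 : ℝ)))) ∧
      -- each Lie derivative L_V G i is N-flat by (ξ, η) at 0
      (∀ i : Fin l, ∀ p₁ p₂ : ℕ, p₁ + p₂ ≤ N → ∀ ζ : Fin l → ℝ,
        ((0 : ℝ), (0 : ℝ), ζ) ∈ U₁ →
        iteratedFDeriv ℝ (p₁ + p₂) (fun x => fderiv ℝ (G i) x (V x))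
          ((0 : ℝ), (0 : ℝ), ζ)
          (fun k : Fin (p₁ + p₂) => if (k : ℕ) < p₁
            then ((1 : ℝ), (0 : ℝ), (0 : Fin l → ℝ))
            else ((0 : ℝ), (1 : ℝ), (0 : Fin l → ℝ))) = 0) := by
  let u : (ℝ × ℝ × (Fin l → ℝ)) →L[ℝ] ℝ := ContinuousLinearMap.fst ℝ ℝ (ℝ × (Fin l → ℝ))
  let v : (ℝ × ℝ × (Fin l → ℝ)) →L[ℝ] ℝ :=
    (ContinuousLinearMap.fst ℝ ℝ (Fin l → ℝ)).comp
      (ContinuousLinearMap.snd ℝ ℝ (ℝ × (Fin l → ℝ)))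
  let z : Fin l → (ℝ × ℝ × (Fin l → ℝ)) →L[ℝ] ℝ := fun i =>
    (ContinuousLinearMap.proj i).comp ((ContinuousLinearMap.snd ℝ ℝ (Fin l → ℝ)).comp
      (ContinuousLinearMap.snd ℝ ℝ (ℝ × (Fin l → ℝ))))
  have hVx : ∀ x, V x = u x • (a x, c x, fun i => e i x) + v x • (b x, d x, fun i => g i x) := by
    intro x
    rw [hV]
    ext <;> simp [u, v]
  choose U hUU₀ hU h0U G hG hGw f hf hfG using fun i =>
    exists_fderiv_eq_homComb u v hU₀ h0 (map_zero u) (map_zero v)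
      (A := fun x => (a x, c x, fun i => e i x)) (B := fun x => (b x, d x, fun i => g i x))
      (ha.prodMk (hc.prodMk (contDiffOn_pi.2 he))) (hb.prodMk (hd.prodMk (contDiffOn_pi.2 hg)))
      hb0 hc0 (z i).contDiff.contDiffOn N hres
  have hopen : IsOpen (U₀ ∩ ⋂ i, U i) := hU₀.inter (isOpen_iInter_of_finite hU)
  have hsub : ∀ i, U₀ ∩ ⋂ i, U i ⊆ U i := fun i =>
    Set.inter_subset_right.trans (Set.iInter_subset _ i)
  refine ⟨U₀ ∩ ⋂ i, U i, G, hopen, ⟨h0, Set.mem_iInter.2 h0U⟩, Set.inter_subset_left,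
    fun i => (hG i).mono (hsub i), ?_, ?_⟩
  · have : (fun i j : Fin l => fderiv ℝ (G i) 0 ((0 : ℝ), (0 : ℝ), Pi.single j (1 : ℝ)))
        = fun i => Pi.single i (1 : ℝ) := by
      ext i j
      rw [hGw i _ (by simp [u]) (by simp [v]), (z i).fderiv]
      simp [z, Pi.single_apply, eq_comm]
    rw [this]
    convert (Pi.basisFun ℝ (Fin l)).linearIndependent using 1
    ext1 i
    rw [Pi.basisFun_apply]
  · intro i p₁ p₂ hp ζ hζ
    rw [← iteratedFDerivWithin_of_isOpen _ hopen hζ,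
      iteratedFDerivWithin_congr (f := homComb u v (N + 1) (f i))
        (fun x hx => by rw [hVx, hfG i x (hsub i hx)]) hζ,
      iteratedFDerivWithin_homComb_eq_zero u v hopen (fun j => (hf i j).mono (hsub i)) hζ
        (by simp [u]) (by simp [v]) (by omega)]
    rfl
end
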